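/- Let n ≥ 2 and regard ℂ^n as a 2n-dimensional real inner product space with ⟨x,y⟩ := Re(∑_{j=1}^n conj(x_j) y_j); multiplication by the imaginary unit i is then a skew-adjoint linear isometry. The curvature tensor of the Fubini–Study metric on ℂP^n normalized to have sectional curvatures in [1,4] has Jacobi operator R(Y,X)X = ⟨X,X⟩Y − ⟨Y,X⟩X + 3⟨Y, iX⟩ iX, so that ⟨R(Y,X)X, Y⟩ = 1 + 3⟨Y, iX⟩² for every orthonormal pair (X,Y). For every k ∈ ℕ the Stiefel average of (X,Y) ↦ (1 + 3⟨Y, iX⟩²)^k equals ∑_{r=0}^k 4^r · C(−1/2, r) · C(−(n−1), k−r) / C(−(2n−1)/2, k). -/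

import Mathlib

/-!
The inner average is the same for every `X`, so everything reduces to moments of `t = ⟪Y, e⟫` on the
unit sphere of a real inner product space `W` of dimension `d + 1`, with `W = X^⊥`, `e = iX` and
`d = 2n - 2`.

Two facts about the `d`-dimensional Hausdorff measure of that sphere are used: it is nonzero and
finite (`hausdorff_sphere_ne_zero`, `hausdorff_sphere_lt_top`), and it is invariant under linear
isometries. Invariance alone determines the moments. For orthonormal `u`, `v`, the integral of
`⟪y, b v + u⟫ ^ (2r + 2)` is proportional to `(1 + b²) ^ (r + 1)`; comparing coefficients of `b²`
gives `(2r + 1) E[⟪y,u⟫^{2r} ⟪y,v⟫²] = E[⟪y,u⟫^{2r+2}]` (`mixed_moment`), and summing over an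
orthonormal basis gives a recursion for the even moments (`moment_succ`). Hence `t²` has the moments
of the Beta distribution with parameters `1/2` and `d/2` (`beta_moment`).

Finally `1 + 3t² = 4t² + (1 - t²)`, and the binomial expansion of its `k`-th power matches the
claimed sum term by term, since `C(-x, s) = (-1)^s (x)_s / s!` with `(x)_s` the rising factorial.
-/

open MeasureTheory RealInnerProductSpace
open scoped Real

/-- The falling factorial `[x]_s = x(x−1)⋯(x−s+1)`. -/
noncomputable def fall (x : ℝ) (s : ℕ) : ℝ := ∏ j ∈ Finset.range s, (x - (j : ℝ))

/-- The generalized binomial coefficient `C(x,s) = [x]_s / s!`. -/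
noncomputable def genBinom (x : ℝ) (s : ℕ) : ℝ := fall x s / (Nat.factorial s : ℝ)

/-- `ℂ^n` regarded as a real inner product space, with `⟪x,y⟫_ℝ = Re ∑ conj(x_j) y_j`. -/
noncomputable instance (n : ℕ) : InnerProductSpace ℝ (EuclideanSpace ℂ (Fin n)) :=
  InnerProductSpace.complexToReal

noncomputable instance (n : ℕ) : MeasurableSpace (EuclideanSpace ℂ (Fin n)) := borel _

instance (n : ℕ) : BorelSpace (EuclideanSpace ℂ (Fin n)) := ⟨rfl⟩

/-- The Stiefel average of a function `f(X,Y)` of orthonormal pairs in an `m`-dimensional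
real inner product space. -/
noncomputable def stiefelAvg {V : Type*} [NormedAddCommGroup V] [InnerProductSpace ℝ V]
    [MeasurableSpace V] [BorelSpace V] (m : ℕ) (f : V → V → ℝ) : ℝ :=
  ((μH[(m : ℝ) - 1] (Metric.sphere (0 : V) 1)).toReal)⁻¹ *
    ∫ X in Metric.sphere (0 : V) 1,
      (((μH[(m : ℝ) - 2] {Y : V | ‖Y‖ = 1 ∧ ⟪X, Y⟫ = 0}).toReal)⁻¹ *
        ∫ Y in {Y : V | ‖Y‖ = 1 ∧ ⟪X, Y⟫ = 0}, f X Y ∂(μH[(m : ℝ) - 2]))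
      ∂(μH[(m : ℝ) - 1])


open Module
open scoped NNReal ENNReal

/-! ### Moments of invariant measures on the sphere -/

section
variable {W : Type*} [NormedAddCommGroup W] [InnerProductSpace ℝ W]
  [MeasurableSpace W] [BorelSpace W]

lemma integrable_of_sphere [FiniteDimensional ℝ W] {ν : Measure W} [IsFiniteMeasure ν]
    (hs : ∀ᵐ y ∂ν, ‖y‖ = 1) {f : W → ℝ} (hf : Continuous f) : Integrable f ν := by
  obtain ⟨C, hC⟩ := (isCompact_sphere (0 : W) 1).exists_bound_of_continuousOn hf.continuousOn
  refine Integrable.of_bound hf.aestronglyMeasurable C ?_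
  filter_upwards [hs] with y hy using hC y (by simpa using hy)

/-- Moments of linear functionals depend only on their norm: a reflection carries `u` to `v`. -/
lemma integral_rotate {ν : Measure W} (hinv : ∀ g : W ≃ₗᵢ[ℝ] W, ν.map g = ν)
    {u v : W} (huv : ‖u‖ = ‖v‖) (p : ℕ) :
    ∫ y, ⟪y, u⟫ ^ p ∂ν = ∫ y, ⟪y, v⟫ ^ p ∂ν := by
  let g : W ≃ₗᵢ[ℝ] W := (ℝ ∙ (u - v))ᗮ.reflection
  have hg : g u = v := Submodule.reflection_sub huv
  conv_rhs => rw [← hinv g, ← hg]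
  rw [integral_map g.continuous.aemeasurable
    (by fun_prop : Continuous fun y => ⟪y, g u⟫ ^ p).aestronglyMeasurable]
  simp only [LinearIsometryEquiv.inner_map_map]

lemma coeff_two_one_add_sq (m : ℝ) (q : ℕ) :
    (Polynomial.C m * (1 + Polynomial.X ^ 2) ^ q).coeff 2 = m * q := by
  rw [Polynomial.coeff_C_mul]
  congr 1
  have : (1 + Polynomial.X ^ 2 : Polynomial ℝ) ^ q
      = Polynomial.expand ℝ 2 ((1 + Polynomial.X) ^ q) := by simp
  have h2 := Polynomial.coeff_expand_mul two_pos ((1 + Polynomial.X : Polynomial ℝ) ^ q) 1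
  rw [one_mul] at h2
  rw [this, h2,
    Polynomial.coeff_one_add_X_pow]
  simp

/-- Comparison of the coefficients of `b²` in
`∫ ⟪y, b v + u⟫ ^ (2r + 2) = (1 + b²) ^ (r + 1) ∫ ⟪y, u⟫ ^ (2r + 2)`. -/
lemma mixed_moment [FiniteDimensional ℝ W] {ν : Measure W} [IsFiniteMeasure ν]
    (hs : ∀ᵐ y ∂ν, ‖y‖ = 1) (hinv : ∀ g : W ≃ₗᵢ[ℝ] W, ν.map g = ν)
    {u v : W} (hu : ‖u‖ = 1) (hv : ‖v‖ = 1) (huv : ⟪u, v⟫ = 0) (r : ℕ) :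
    (2 * r + 1) * ∫ y, ⟪y, u⟫ ^ (2 * r) * ⟪y, v⟫ ^ 2 ∂ν = ∫ y, ⟪y, u⟫ ^ (2 * r + 2) ∂ν := by
  set m := ∫ y, ⟪y, u⟫ ^ (2 * r + 2) ∂ν with hm
  have hscale : ∀ b : ℝ, ∫ y, ⟪y, b • v + u⟫ ^ (2 * r + 2) ∂ν = m * (1 + b ^ 2) ^ (r + 1) := by
    intro b
    have hn : ‖b • v + u‖ ^ 2 = 1 + b ^ 2 := by
      rw [norm_add_sq_real, inner_smul_left, real_inner_comm, huv, norm_smul, hu, hv,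
        Real.norm_eq_abs, mul_one, sq_abs]
      simp; ring
    have h1 : ‖b • v + u‖ = ‖√(1 + b ^ 2) • u‖ := by
      rw [norm_smul, hu, mul_one, Real.norm_of_nonneg (Real.sqrt_nonneg _), ← hn,
        Real.sqrt_sq (norm_nonneg _)]
    rw [integral_rotate hinv h1]
    simp only [inner_smul_right, mul_pow]
    rw [integral_const_mul, mul_comm, hm, show 2 * r + 2 = 2 * (r + 1) by ring, pow_mul √_,
      Real.sq_sqrt (by positivity)]
  have hint : ∀ i j : ℕ, Integrable (fun y => ⟪y, v⟫ ^ i * ⟪y, u⟫ ^ j) ν := fun i j =>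
    integrable_of_sphere hs (by fun_prop)
  have hpoly : (∑ j ∈ Finset.range (2 * r + 2 + 1), Polynomial.C
        ((∫ y, ⟪y, v⟫ ^ j * ⟪y, u⟫ ^ (2 * r + 2 - j) ∂ν) * ((2 * r + 2).choose j : ℝ))
          * Polynomial.X ^ j) = Polynomial.C m * (1 + Polynomial.X ^ 2) ^ (r + 1) := by
    refine Polynomial.funext fun b => ?_
    simp only [Polynomial.eval_finsetSum, Polynomial.eval_mul, Polynomial.eval_C,
      Polynomial.eval_pow, Polynomial.eval_X, Polynomial.eval_add, Polynomial.eval_one]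
    rw [← hscale b]
    simp only [inner_add_right, inner_smul_right, add_pow, mul_pow]
    rw [integral_finsetSum]
    · refine Finset.sum_congr rfl fun j _ => ?_
      rw [← integral_mul_const, ← integral_mul_const]
      congr 1; ext y; ring
    · intro j _
      exact integrable_of_sphere hs (by fun_prop)
  have h2 := congrArg (fun p => Polynomial.coeff p 2) hpoly
  simp only [coeff_two_one_add_sq, Polynomial.finsetSum_coeff, Polynomial.coeff_C_mul_X_pow] at h2
  rw [Finset.sum_ite_eq, if_pos (by simp)] at h2
  rw [Nat.add_sub_cancel, Nat.cast_choose_two] at h2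
  push_cast at h2
  have h3 : ∫ y, ⟪y, u⟫ ^ (2 * r) * ⟪y, v⟫ ^ 2 ∂ν = ∫ y, ⟪y, v⟫ ^ 2 * ⟪y, u⟫ ^ (2 * r) ∂ν := by
    simp only [mul_comm]
  rw [h3]
  have hr : (r + 1 : ℝ) ≠ 0 := by positivity
  apply mul_right_cancel₀ hr
  rw [← h2]; ring

/-- Recursion for the even moments, from `1 = ‖y‖² = ∑ i, ⟪y, b i⟫²` in an orthonormal basis. -/
lemma moment_succ [FiniteDimensional ℝ W] {ν : Measure W} [IsFiniteMeasure ν]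
    (hs : ∀ᵐ y ∂ν, ‖y‖ = 1) (hinv : ∀ g : W ≃ₗᵢ[ℝ] W, ν.map g = ν)
    {d : ℕ} (hd : finrank ℝ W = d + 1) {e : W} (he : ‖e‖ = 1) (r : ℕ) :
    (2 * r + 1) * ∫ y, ⟪y, e⟫ ^ (2 * r) ∂ν = (2 * r + 1 + d) * ∫ y, ⟪y, e⟫ ^ (2 * r + 2) ∂ν := by
  let b : OrthonormalBasis (Fin (d + 1)) ℝ W := (stdOrthonormalBasis ℝ W).reindex (finCongr hd)
  have hb : ∀ i, ‖b i‖ = 1 := b.orthonormal.1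
  have h0 : ‖e‖ = ‖b 0‖ := by rw [he, hb]
  rw [integral_rotate hinv h0, integral_rotate hinv h0]
  have h1 : ∫ y, ⟪y, b 0⟫ ^ (2 * r) ∂ν = ∑ i, ∫ y, ⟪y, b 0⟫ ^ (2 * r) * ⟪y, b i⟫ ^ 2 ∂ν := by
    rw [← integral_finsetSum _ fun i _ => integrable_of_sphere hs (by fun_prop)]
    refine integral_congr_ae ?_
    filter_upwards [hs] with y hy
    rw [← Finset.mul_sum, b.sum_sq_inner_left, hy]; ring
  rw [h1, Fin.sum_univ_succ, mul_add, Finset.mul_sum]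
  have h2 : ∀ i : Fin d, (2 * r + 1) * ∫ y, ⟪y, b 0⟫ ^ (2 * r) * ⟪y, b i.succ⟫ ^ 2 ∂ν
      = ∫ y, ⟪y, b 0⟫ ^ (2 * r + 2) ∂ν := fun i =>
    mixed_moment hs hinv (hb _) (hb _) (b.orthonormal.2 (Fin.succ_ne_zero i).symm) r
  simp only [h2, ← pow_add]
  simp; ring

/-- `⟪y, e⟫²` has the mixed moments of the Beta distribution with parameters `1/2` and `d/2`. -/
lemma beta_moment [FiniteDimensional ℝ W] {ν : Measure W} [IsFiniteMeasure ν]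
    (hs : ∀ᵐ y ∂ν, ‖y‖ = 1) (hinv : ∀ g : W ≃ₗᵢ[ℝ] W, ν.map g = ν)
    {d : ℕ} (hd : finrank ℝ W = d + 1) {e : W} (he : ‖e‖ = 1) (s r : ℕ) :
    (∫ y, (⟪y, e⟫ ^ 2) ^ r * (1 - ⟪y, e⟫ ^ 2) ^ s ∂ν) * (ascPochhammer ℝ (r + s)).eval ((d + 1) / 2 : ℝ)
      = ν.real Set.univ * ((ascPochhammer ℝ r).eval (1 / 2) * (ascPochhammer ℝ s).eval (d / 2 : ℝ)) := by
  induction s generalizing r with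
  | zero =>
    induction r with
    | zero => simp
    | succ r ih =>
      have h := moment_succ hs hinv hd he r
      simp only [← pow_mul, pow_zero, mul_one, ascPochhammer_zero,
        Polynomial.eval_one, mul_add] at ih ⊢
      rw [ascPochhammer_succ_eval, ascPochhammer_succ_eval]
      linear_combination (r + 1 / 2 : ℝ) * ih
        - (1 / 2) * (ascPochhammer ℝ r).eval ((d + 1) / 2 : ℝ) * h
  | succ s ih =>
    have hsplit : ∫ y, (⟪y, e⟫ ^ 2) ^ r * (1 - ⟪y, e⟫ ^ 2) ^ (s + 1) ∂ν =
        (∫ y, (⟪y, e⟫ ^ 2) ^ r * (1 - ⟪y, e⟫ ^ 2) ^ s ∂ν)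
          - ∫ y, (⟪y, e⟫ ^ 2) ^ (r + 1) * (1 - ⟪y, e⟫ ^ 2) ^ s ∂ν := by
      rw [← integral_sub (integrable_of_sphere hs (by fun_prop))
        (integrable_of_sphere hs (by fun_prop))]
      congr 1; ext y; ring
    have h1 := ih r
    have h2 := ih (r + 1)
    rw [show r + 1 + s = r + s + 1 by ring, ascPochhammer_succ_eval, ascPochhammer_succ_eval] at h2
    rw [hsplit, ← add_assoc, ascPochhammer_succ_eval, ascPochhammer_succ_eval]
    push_cast at h2 ⊢
    linear_combination ((d + 1) / 2 + (r + s) : ℝ) * h1 - h2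

end
/-! ### Hausdorff measure of the sphere -/

section
variable {W : Type*} [NormedAddCommGroup W] [InnerProductSpace ℝ W]

/-- Radial projection to the unit sphere is Lipschitz outside the open unit ball. -/
lemma norm_radial_sub_le {u v : W} (hu : 1 ≤ ‖u‖) (hv : 1 ≤ ‖v‖) :
    ‖‖u‖⁻¹ • u - ‖v‖⁻¹ • v‖ ≤ 2 * ‖u - v‖ := by
  have hu0 : 0 < ‖u‖ := by linarith
  have hv0 : 0 < ‖v‖ := by linarith
  have h1 : ‖u‖⁻¹ • u - ‖v‖⁻¹ • v = ‖u‖⁻¹ • (u - v) + (‖u‖⁻¹ * (‖v‖ - ‖u‖)) • (‖v‖⁻¹ • v) := by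
    have : ‖v‖⁻¹ = ‖u‖⁻¹ - ‖u‖⁻¹ * (‖v‖ - ‖u‖) * ‖v‖⁻¹ := by field_simp; ring
    rw [smul_smul, smul_sub, sub_add, ← sub_smul, ← this]
  have hi : ‖u‖⁻¹ ≤ 1 := inv_le_one_of_one_le₀ hu
  have h2 : |‖v‖ - ‖u‖| ≤ ‖u - v‖ := by
    rw [abs_sub_comm]; exact abs_norm_sub_norm_le u v
  have h3 : ‖‖v‖⁻¹ • v‖ = 1 := by
    rw [norm_smul, norm_inv, norm_norm, inv_mul_cancel₀ hv0.ne']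
  rw [h1]
  refine (norm_add_le _ _).trans ?_
  rw [norm_smul, norm_smul, h3, norm_mul, norm_inv, norm_norm, mul_one, Real.norm_eq_abs]
  have := mul_le_mul hi h2 (abs_nonneg _) zero_le_one
  have := mul_le_mul_of_nonneg_right hi (norm_nonneg (u - v))
  linarith

variable [FiniteDimensional ℝ W] [MeasurableSpace W] [BorelSpace W]

/-- Orthogonal projection to a hyperplane maps the sphere onto a set containing the unit ball, and
it does not increase Hausdorff measure. -/
lemma hausdorff_sphere_ne_zero {d : ℕ} (hd : finrank ℝ W = d + 1) :
    μH[(d : ℝ)] (Metric.sphere (0 : W) 1) ≠ 0 := by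
  have : Nontrivial W := nontrivial_of_finrank_pos (R := ℝ) (by omega)
  obtain ⟨e, he⟩ := exists_norm_eq W zero_le_one
  have : Fact (finrank ℝ W = d + 1) := ⟨hd⟩
  have he0 : e ≠ 0 := by rintro rfl; simp at he
  have hK : finrank ℝ (ℝ ∙ e)ᗮ = d := Submodule.finrank_orthogonal_span_singleton he0
  have hsub : Metric.ball (0 : (ℝ ∙ e)ᗮ) 1 ⊆
      (ℝ ∙ e)ᗮ.orthogonalProjectionOnto '' Metric.sphere (0 : W) 1 := by
    intro y hy
    have hy1 : ‖(y : W)‖ < 1 := by simpa using hy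
    refine ⟨(y : W) + √(1 - ‖(y : W)‖ ^ 2) • e, ?_, ?_⟩
    · have horth : ⟪(y : W), √(1 - ‖(y : W)‖ ^ 2) • e⟫ = 0 := by
        rw [inner_smul_right, real_inner_comm,
          (Submodule.mem_orthogonal_singleton_iff_inner_right.1 y.2), mul_zero]
      have := norm_add_sq_real (y : W) (√(1 - ‖(y : W)‖ ^ 2) • e)
      rw [horth, norm_smul, he, Real.norm_eq_abs, mul_one, sq_abs, Real.sq_sqrt
        (by nlinarith [norm_nonneg (y : W)])] at this
      rw [mem_sphere_zero_iff_norm]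
      have h1 : ‖(y : W) + √(1 - ‖(y : W)‖ ^ 2) • e‖ ^ 2 = 1 ^ 2 := by rw [this]; ring
      exact (sq_eq_sq₀ (norm_nonneg _) zero_le_one).1 h1
    · rw [map_add, map_smul]
      simp [Submodule.orthogonalProjectionOnto_orthogonalComplement_singleton_eq_zero]
  intro h0
  have h1 := hausdorffMeasure_orthogonalProjectionOnto_le (ℝ ∙ e)ᗮ (d : ℝ)
    (Metric.sphere (0 : W) 1) (Nat.cast_nonneg d)
  have h2 := (measure_mono (μ := μH[(d : ℝ)]) hsub).trans h1
  rw [h0, ← hK] at h2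
  exact (Metric.measure_ball_pos μH[(finrank ℝ (ℝ ∙ e)ᗮ : ℝ)] (0 : (ℝ ∙ e)ᗮ) one_pos).not_ge h2

/-- Near `e` the sphere is a Lipschitz image, under central projection, of a ball in the
hyperplane `e^⊥`; compactness of the sphere does the rest. -/
lemma hausdorff_sphere_lt_top {d : ℕ} (hd : finrank ℝ W = d + 1) :
    μH[(d : ℝ)] (Metric.sphere (0 : W) 1) < ∞ := by
  refine (isCompact_sphere (0 : W) 1).measure_lt_top_of_nhdsWithin fun e he => ?_
  have he1 : ‖e‖ = 1 := by simpa using he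
  have : Fact (finrank ℝ W = d + 1) := ⟨hd⟩
  have he0 : e ≠ 0 := by rintro rfl; simp at he1
  have hK : finrank ℝ (ℝ ∙ e)ᗮ = d := Submodule.finrank_orthogonal_span_singleton he0
  have hee : ⟪e, e⟫ = 1 := by rw [real_inner_self_eq_norm_sq, he1]; norm_num
  let f : (ℝ ∙ e)ᗮ → W := fun y => ‖(y : W) + e‖⁻¹ • ((y : W) + e)
  have hge : ∀ y : (ℝ ∙ e)ᗮ, 1 ≤ ‖(y : W) + e‖ := fun y => by
    have h := real_inner_le_norm e ((y : W) + e)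
    rwa [inner_add_right, Submodule.mem_orthogonal_singleton_iff_inner_right.1 y.2, hee, he1,
      zero_add, one_mul] at h
  have hf : LipschitzWith 2 f := by
    refine LipschitzWith.of_dist_le_mul fun x y => ?_
    rw [dist_eq_norm, dist_eq_norm]
    refine (norm_radial_sub_le (hge x) (hge y)).trans (le_of_eq ?_)
    simp
  have hsub : {x : W | 1 / 2 < ⟪e, x⟫} ∩ Metric.sphere (0 : W) 1 ⊆
      f '' Metric.closedBall 0 4 := by
    rintro x ⟨hx : 1 / 2 < ⟪e, x⟫, hx1⟩
    have hx1 : ‖x‖ = 1 := by simpa using hx1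
    have ha : 0 < ⟪e, x⟫ := by linarith
    refine ⟨⟨⟪e, x⟫⁻¹ • x - e, ?_⟩, ?_, ?_⟩
    · rw [Submodule.mem_orthogonal_singleton_iff_inner_right, inner_sub_right, inner_smul_right,
        hee, inv_mul_cancel₀ ha.ne', sub_self]
    · have h2 : ⟪e, x⟫⁻¹ ≤ 2 := by
        rw [inv_le_comm₀ ha two_pos]; linarith
      rw [mem_closedBall_zero_iff, Submodule.coe_norm]
      refine (norm_sub_le _ _).trans ?_
      rw [norm_smul, hx1, he1, norm_inv, Real.norm_of_nonneg ha.le]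
      linarith
    · simp only [f, sub_add_cancel, norm_smul, hx1, norm_inv, Real.norm_of_nonneg ha.le, mul_one,
        inv_inv, smul_smul, mul_inv_cancel₀ ha.ne', one_smul]
  refine ⟨{x : W | 1 / 2 < ⟪e, x⟫} ∩ Metric.sphere (0 : W) 1, ?_, ?_⟩
  · rw [Set.inter_comm]
    refine inter_mem_nhdsWithin _ ((isOpen_lt continuous_const (by fun_prop)).mem_nhds ?_)
    simp only [Set.mem_ofPred_eq, hee]; norm_num
  · refine (measure_mono hsub).trans_lt ?_
    refine (hf.hausdorffMeasure_image_le (Nat.cast_nonneg d) _).trans_lt ?_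
    refine ENNReal.mul_lt_top (ENNReal.rpow_lt_top_of_nonneg (Nat.cast_nonneg d) (by simp)) ?_
    rw [← hK]
    exact (isCompact_closedBall _ _).measure_lt_top

end

/-! ### The Stiefel average -/

/-- Binomial coefficients at negative arguments through the rising factorial `(x)_s`. -/
lemma genBinom_neg (x : ℝ) (s : ℕ) :
    genBinom (-x) s = (-1) ^ s * (ascPochhammer ℝ s).eval x / (Nat.factorial s : ℝ) := by
  rw [genBinom, fall]
  congr 1
  induction s with
  | zero => simp
  | succ s ih => rw [Finset.prod_range_succ, ih, ascPochhammer_succ_eval]; ring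

section
variable {W : Type*} [NormedAddCommGroup W] [InnerProductSpace ℝ W]
  [MeasurableSpace W] [BorelSpace W]

/-- The normalized average of `(1 + 3⟪y, e⟫²)^k` over the unit sphere of a `(d + 1)`-dimensional
space. -/
lemma sphere_average [FiniteDimensional ℝ W] {d : ℕ} (hd : finrank ℝ W = d + 1) {e : W}
    (he : ‖e‖ = 1) (k : ℕ) :
    ((μH[(d : ℝ)] (Metric.sphere (0 : W) 1)).toReal)⁻¹ *
      ∫ y in Metric.sphere (0 : W) 1, (1 + 3 * ⟪y, e⟫ ^ 2) ^ k ∂μH[(d : ℝ)] =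
    ∑ r ∈ Finset.range (k + 1), 4 ^ r * genBinom (-(1 / 2)) r * genBinom (-(d / 2 : ℝ)) (k - r) /
          genBinom (-((d + 1) / 2 : ℝ)) k := by
  set ν : Measure W := μH[(d : ℝ)].restrict (Metric.sphere (0 : W) 1) with hν
  have hms : MeasurableSet (Metric.sphere (0 : W) 1) := Metric.isClosed_sphere.measurableSet
  have : IsFiniteMeasure ν := ⟨by
    rw [hν, Measure.restrict_apply_univ]; exact hausdorff_sphere_lt_top hd⟩
  have hs : ∀ᵐ y ∂ν, ‖y‖ = 1 := by
    filter_upwards [ae_restrict_mem hms] with y hy using by simpa using hy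
  have hinv : ∀ g : W ≃ₗᵢ[ℝ] W, ν.map g = ν := by
    intro g
    have h1 : MeasurePreserving g μH[(d : ℝ)] μH[(d : ℝ)] :=
      g.toIsometryEquiv.measurePreserving_hausdorffMeasure _
    have h2 := (h1.restrict_preimage hms).map_eq
    have h3 : g ⁻¹' Metric.sphere (0 : W) 1 = Metric.sphere (0 : W) 1 := by
      ext y; simp
    rwa [h3] at h2
  have hM : ν.real Set.univ = (μH[(d : ℝ)] (Metric.sphere (0 : W) 1)).toReal := by
    rw [measureReal_def, hν, Measure.restrict_apply_univ]
  have hM0 : ν.real Set.univ ≠ 0 := by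
    rw [hM]
    exact (ENNReal.toReal_pos (hausdorff_sphere_ne_zero hd) (hausdorff_sphere_lt_top hd).ne).ne'
  rw [← hM]
  have hexp : ∫ y, (1 + 3 * ⟪y, e⟫ ^ 2) ^ k ∂ν = ∑ r ∈ Finset.range (k + 1),
      4 ^ r * (k.choose r : ℝ) * ∫ y, (⟪y, e⟫ ^ 2) ^ r * (1 - ⟪y, e⟫ ^ 2) ^ (k - r) ∂ν := by
    simp only [← integral_const_mul]
    rw [← integral_finsetSum _ fun i _ => integrable_of_sphere hs (by fun_prop)]
    congr 1; ext y
    rw [show 1 + 3 * ⟪y, e⟫ ^ 2 = 4 * ⟪y, e⟫ ^ 2 + (1 - ⟪y, e⟫ ^ 2) by ring, add_pow]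
    refine Finset.sum_congr rfl fun r _ => ?_
    rw [mul_pow]; ring
  rw [hexp, Finset.mul_sum]
  refine Finset.sum_congr rfl fun r hr => ?_
  have hrk : r ≤ k := Nat.lt_succ_iff.1 (Finset.mem_range.1 hr)
  have hb := beta_moment hs hinv hd he (k - r) r
  rw [Nat.add_sub_cancel' hrk] at hb
  have hP : (ascPochhammer ℝ k).eval ((d + 1) / 2 : ℝ) ≠ 0 :=
    (ascPochhammer_pos k _ (by positivity)).ne'
  rw [eq_div_of_mul_eq hP hb, genBinom_neg, genBinom_neg, genBinom_neg, Nat.cast_choose ℝ hrk]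
  have hsgn : (-1 : ℝ) ^ k = (-1) ^ r * (-1) ^ (k - r) := by
    rw [← pow_add, Nat.add_sub_cancel' hrk]
  rw [hsgn]
  have h1 : ((-1 : ℝ) ^ r) ≠ 0 := by simp
  have h2 : ((-1 : ℝ) ^ (k - r)) ≠ 0 := by simp
  have h3 := Nat.factorial_ne_zero
  field_simp

end

section
variable {V : Type*} [NormedAddCommGroup V] [InnerProductSpace ℝ V] [FiniteDimensional ℝ V]
  [MeasurableSpace V] [BorelSpace V]

/-- The inner average of the Stiefel integral, obtained by transporting the Hausdorff measure of
the hyperplane `X^⊥` along its isometric inclusion. -/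
lemma fiber_average {d : ℕ} (hd : finrank ℝ V = d + 2) {X Z : V} (hX : ‖X‖ = 1) (hZ : ‖Z‖ = 1)
    (hXZ : ⟪X, Z⟫ = 0) (k : ℕ) :
    ((μH[(d : ℝ)] {Y : V | ‖Y‖ = 1 ∧ ⟪X, Y⟫ = 0}).toReal)⁻¹ *
      ∫ Y in {Y : V | ‖Y‖ = 1 ∧ ⟪X, Y⟫ = 0}, (1 + 3 * ⟪Y, Z⟫ ^ 2) ^ k ∂μH[(d : ℝ)] =
    ∑ r ∈ Finset.range (k + 1), 4 ^ r * genBinom (-(1 / 2)) r * genBinom (-(d / 2 : ℝ)) (k - r) /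
          genBinom (-((d + 1) / 2 : ℝ)) k := by
  have : Fact (finrank ℝ V = (d + 1) + 1) := ⟨hd⟩
  have hX0 : X ≠ 0 := by rintro rfl; simp at hX
  have hK : finrank ℝ (ℝ ∙ X)ᗮ = d + 1 := Submodule.finrank_orthogonal_span_singleton hX0
  let Z' : (ℝ ∙ X)ᗮ := ⟨Z, Submodule.mem_orthogonal_singleton_iff_inner_right.2 hXZ⟩
  have hemb : MeasurableEmbedding ((↑) : (ℝ ∙ X)ᗮ → V) :=
    MeasurableEmbedding.subtype_coe (Submodule.closed_of_finiteDimensional _).measurableSet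
  have himg : {Y : V | ‖Y‖ = 1 ∧ ⟪X, Y⟫ = 0} =
      ((↑) : (ℝ ∙ X)ᗮ → V) '' Metric.sphere 0 1 := by
    ext Y
    simp only [Set.mem_ofPred_eq, Set.mem_image, mem_sphere_zero_iff_norm]
    constructor
    · rintro ⟨h1, h2⟩
      exact ⟨⟨Y, Submodule.mem_orthogonal_singleton_iff_inner_right.2 h2⟩, h1, rfl⟩
    · rintro ⟨y, h1, rfl⟩
      exact ⟨h1, Submodule.mem_orthogonal_singleton_iff_inner_right.1 y.2⟩
  have hiso : Isometry ((↑) : (ℝ ∙ X)ᗮ → V) := (ℝ ∙ X)ᗮ.subtypeₗᵢ.isometry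
  have hmap := hiso.map_hausdorffMeasure
    (d := d) (Or.inl (Nat.cast_nonneg d))
  rw [← sphere_average hK (e := Z') hZ k, himg,
    hiso.hausdorffMeasure_image
      (Or.inl (Nat.cast_nonneg d))]
  congr 1
  have hres : (μH[(d : ℝ)] : Measure V).restrict (((↑) : (ℝ ∙ X)ᗮ → V) '' Metric.sphere 0 1) =
      ((μH[(d : ℝ)]).restrict (Metric.sphere (0 : (ℝ ∙ X)ᗮ) 1)).map (↑) := by
    have h1 := hemb.restrict_map μH[(d : ℝ)] (((↑) : (ℝ ∙ X)ᗮ → V) '' Metric.sphere 0 1)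
    rw [Set.preimage_image_eq _ Subtype.val_injective] at h1
    rw [← h1, hmap, Measure.restrict_restrict_of_subset]
    exact Set.image_subset_range _ _
  rw [hres, hemb.integral_map]
  rfl

end

/-- The `k`-th moment of the sectional curvature `1 + 3⟨Y,iX⟫²` of the normalized
Fubini–Study metric on `ℂP^n`, as a Stiefel average over orthonormal pairs in `ℂ^n ≅ ℝ^{2n}`. -/
theorem complex_projective_space_moments (n : ℕ) (hn : 2 ≤ n) (k : ℕ) :
    stiefelAvg (2 * n)
        (fun X Y : EuclideanSpace ℂ (Fin n) =>
          (1 + 3 * ⟪Y, Complex.I • X⟫ ^ 2) ^ k) =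
      ∑ r ∈ Finset.range (k + 1),
        4 ^ r * genBinom (-(1 / 2)) r * genBinom (-((n : ℝ) - 1)) (k - r) /
          genBinom (-(2 * (n : ℝ) - 1) / 2) k := by
  have hfin : finrank ℝ (EuclideanSpace ℂ (Fin n)) = 2 * n := by
    rw [finrank_real_of_complex, finrank_euclideanSpace_fin]
  obtain ⟨d, hd⟩ : ∃ d, 2 * n = d + 2 := ⟨2 * n - 2, by omega⟩
  have hdR : (2 * n : ℝ) = d + 2 := by exact_mod_cast hd
  have hdim : finrank ℝ (EuclideanSpace ℂ (Fin n)) = d + 2 := hfin.trans hd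
  have : FiniteDimensional ℝ (EuclideanSpace ℂ (Fin n)) := .of_finrank_pos (by omega)
  have e2 : ((2 * n : ℕ) : ℝ) - 2 = d := by rw [hd]; push_cast; ring
  have e1 : ((2 * n : ℕ) : ℝ) - 1 = (d + 1 : ℕ) := by rw [hd]; push_cast; ring
  have e3 : -((n : ℝ) - 1) = -(d / 2 : ℝ) := by linear_combination (-1 / 2 : ℝ) * hdR
  have e4 : -(2 * (n : ℝ) - 1) / 2 = -((d + 1) / 2 : ℝ) := by
    linear_combination (-1 / 2 : ℝ) * hdR
  rw [stiefelAvg, e1, e2, e3, e4]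
  rw [setIntegral_congr_fun Metric.isClosed_sphere.measurableSet fun X hX => ?_,
    setIntegral_const, smul_eq_mul, ← mul_assoc, measureReal_def, inv_mul_cancel₀, one_mul]
  · exact (ENNReal.toReal_pos (hausdorff_sphere_ne_zero (d := d + 1) hdim)
      (hausdorff_sphere_lt_top (d := d + 1) hdim).ne).ne'
  · have hX1 : ‖X‖ = 1 := by simpa using hX
    refine fiber_average hdim hX1 ?_ ?_ k
    · rw [norm_smul, Complex.norm_I, one_mul, hX1]
    · change (inner ℂ X (Complex.I • X)).re = 0
      rw [inner_smul_right, inner_self_eq_norm_sq_to_K, hX1]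
      simp
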